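/- arXiv:1310.4035 — 3 statements merged into one kernel-verified Lean document; each statement's English description precedes it below -/
import Mathlib

section
/- Let K be a compact Hausdorff space, δ > 0, and F a nonempty δ-≺-chain in C(K). For every initial segment P of F, both the union of the sets W_I over all initial segments I with I ⊆ P, and the union of the sets W_J over all initial segments J with P ⊆ J, are compact subsets of K. -/
open Set Topology Filter

/-- `f ≺ g`: `f ≠ g` and `f` agrees with `g` on the support of `f` (the closure of
the set where `f` is nonzero). -/
def Prec {K : Type*} [TopologicalSpace K] (f g : C(K, ℝ)) : Prop :=
  f ≠ g ∧ ∀ t ∈ closure {t | f t ≠ 0}, f t = g t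

/-- `f ≺_δ g`: `f ≺ g` and `‖f - g‖ ≥ δ`. -/
def PrecDelta {K : Type*} [TopologicalSpace K] [CompactSpace K] (δ : ℝ) (f g : C(K, ℝ)) : Prop :=
  Prec f g ∧ δ ≤ ‖f - g‖

/-- `F` is a `δ`-`≺`-chain. -/
def IsPrecChain {K : Type*} [TopologicalSpace K] [CompactSpace K] (δ : ℝ)
    (F : Set C(K, ℝ)) : Prop :=
  ∀ f ∈ F, ∀ g ∈ F, f ≠ g → PrecDelta δ f g ∨ PrecDelta δ g f

/-- A compact Hausdorff space has the Bishop property (B) if for every `δ > 0`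
every `δ`-`≺`-chain in `C(K)` is countable. -/
def HasBishop (K : Type*) [TopologicalSpace K] [CompactSpace K] [T2Space K] : Prop :=
  ∀ δ : ℝ, 0 < δ → ∀ F : Set C(K, ℝ), IsPrecChain δ F → F.Countable

/-- `I` is an initial segment of the chain `F`. -/
def IsInitialSegment {K : Type*} [TopologicalSpace K] (F I : Set C(K, ℝ)) : Prop :=
  I ⊆ F ∧ ∀ f ∈ F, ∀ g ∈ I, Prec f g → f ∈ I

/-- The set `W_I = ⋂_{f ∈ I} f⁻¹({0}) ∩ ⋂_{g ∈ F∖I} g⁻¹({x : |x| ≥ δ})`. -/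
def W {K : Type*} [TopologicalSpace K] (δ : ℝ) (F I : Set C(K, ℝ)) : Set K :=
  (⋂ f ∈ I, (f : C(K, ℝ)) ⁻¹' {0}) ∩ ⋂ g ∈ F \ I, (g : C(K, ℝ)) ⁻¹' {x : ℝ | δ ≤ |x|}

/-!
A point `t` lies in `W_I` exactly when every function of `F` is either `0` or at least `δ` in
modulus at `t`, and `I` is the set of those that vanish at `t`. That set is always an initial
segment, so a union of sets `W_I` is cut out by a condition on it. Under the dichotomy, "`f` does
not vanish at `t`" becomes the closed condition `δ ≤ |f t|`, which makes both unions closed.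
-/

section Unions

variable {K : Type*} [TopologicalSpace K] {δ : ℝ} {F I P : Set C(K, ℝ)} {t : K}

/-- The part of `F` that vanishes at `t`; for `0 < δ` it is the only initial segment `I` for which
`t` can lie in `W δ F I`. -/
def vanishingSegment (F : Set C(K, ℝ)) (t : K) : Set C(K, ℝ) :=
  {f ∈ F | f t = 0}

/-- The points at which no function of `F` takes a nonzero value of modulus less than `δ`; for
`0 < δ` it is the union of all the sets `W δ F I`. -/
def gapSet (δ : ℝ) (F : Set C(K, ℝ)) : Set K :=
  {t | ∀ f ∈ F, f t = 0 ∨ δ ≤ |f t|}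

lemma isInitialSegment_vanishingSegment (F : Set C(K, ℝ)) (t : K) :
    IsInitialSegment F (vanishingSegment F t) := by
  refine ⟨fun f hf => hf.1, fun f hf g ⟨_, hgt⟩ hfg => ⟨hf, ?_⟩⟩
  by_contra hft
  exact hft ((hfg.2 t (subset_closure hft)).trans hgt)

lemma isClosed_gapSet (δ : ℝ) (F : Set C(K, ℝ)) : IsClosed (gapSet δ F) := by
  simp only [gapSet, ofPred_forall, ofPred_or]
  exact isClosed_biInter fun f _ =>
    (isClosed_eq f.continuous continuous_const).union
      (isClosed_le continuous_const f.continuous.abs)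

lemma le_abs_iff_ne_zero_of_mem_gapSet (hδ : 0 < δ) (ht : t ∈ gapSet δ F) {f : C(K, ℝ)}
    (hf : f ∈ F) : δ ≤ |f t| ↔ f t ≠ 0 :=
  ⟨fun h => abs_pos.mp (hδ.trans_le h), (ht f hf).resolve_left⟩

lemma mem_W_iff : t ∈ W δ F I ↔ (∀ f ∈ I, f t = 0) ∧ ∀ f ∈ F \ I, δ ≤ |f t| := by
  simp only [W, mem_inter_iff, mem_iInter, mem_preimage, mem_singleton_iff, mem_ofPred_eq]

lemma mem_W_iff_vanishingSegment_eq (hδ : 0 < δ) (hI : I ⊆ F) :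
    t ∈ W δ F I ↔ t ∈ gapSet δ F ∧ vanishingSegment F t = I := by
  rw [mem_W_iff]
  constructor
  · rintro ⟨hzero, hlarge⟩
    have hgap : t ∈ gapSet δ F := fun f hf =>
      (em (f ∈ I)).imp (hzero f) fun hfI => hlarge f ⟨hf, hfI⟩
    refine ⟨hgap, Subset.antisymm (fun f ⟨hf, hft⟩ => ?_) fun f hf => ⟨hI hf, hzero f hf⟩⟩
    by_contra hfI
    exact (le_abs_iff_ne_zero_of_mem_gapSet hδ hgap hf).mp (hlarge f ⟨hf, hfI⟩) hft
  · rintro ⟨hgap, rfl⟩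
    exact ⟨fun f hf => hf.2, fun f ⟨hf, hfI⟩ => (hgap f hf).resolve_left fun hft => hfI ⟨hf, hft⟩⟩

lemma iUnion_W_eq (hδ : 0 < δ) (F : Set C(K, ℝ)) (p : Set C(K, ℝ) → Prop) :
    (⋃ I ∈ {I | IsInitialSegment F I ∧ p I}, W δ F I) =
      {t ∈ gapSet δ F | p (vanishingSegment F t)} := by
  ext t
  simp only [mem_iUnion, mem_ofPred_eq, exists_prop]
  constructor
  · rintro ⟨I, ⟨hI, hpI⟩, htI⟩
    obtain ⟨hgap, rfl⟩ := (mem_W_iff_vanishingSegment_eq hδ hI.1).mp htI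
    exact ⟨hgap, hpI⟩
  · rintro ⟨hgap, hp⟩
    have hseg := isInitialSegment_vanishingSegment F t
    exact ⟨_, ⟨hseg, hp⟩, (mem_W_iff_vanishingSegment_eq hδ hseg.1).mpr ⟨hgap, rfl⟩⟩

lemma vanishingSegment_subset_iff (hδ : 0 < δ) (ht : t ∈ gapSet δ F) :
    vanishingSegment F t ⊆ P ↔ ∀ f ∈ F \ P, δ ≤ |f t| :=
  calc
    vanishingSegment F t ⊆ P
    _ ↔ ∀ f ∈ F \ P, f t ≠ 0 :=
      ⟨fun h _ hf hft => hf.2 (h ⟨hf.1, hft⟩),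
        fun h f hf => not_not.mp fun hfP => h f ⟨hf.1, hfP⟩ hf.2⟩
    _ ↔ ∀ f ∈ F \ P, δ ≤ |f t| :=
      forall₂_congr fun _ hf => (le_abs_iff_ne_zero_of_mem_gapSet hδ ht hf.1).symm

lemma isClosed_gapSet_vanishingSegment_subset (hδ : 0 < δ) (F P : Set C(K, ℝ)) :
    IsClosed {t ∈ gapSet δ F | vanishingSegment F t ⊆ P} := by
  have hlarge : IsClosed {t : K | ∀ f ∈ F \ P, δ ≤ |f t|} := by
    simp only [ofPred_forall]
    exact isClosed_biInter fun f _ => isClosed_le continuous_const f.continuous.abs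
  convert (isClosed_gapSet δ F).inter hlarge using 1
  ext t
  exact and_congr_right fun ht => vanishingSegment_subset_iff hδ ht

lemma isClosed_subset_vanishingSegment (F P : Set C(K, ℝ)) :
    IsClosed {t | P ⊆ vanishingSegment F t} := by
  simp only [subset_def, vanishingSegment, ofPred_forall, ofPred_and]
  exact isClosed_biInter fun f _ =>
    isClosed_const.inter (isClosed_eq f.continuous continuous_const)

end Unions

theorem stmt3_general {K : Type*} [TopologicalSpace K] {δ : ℝ} (hδ : 0 < δ)
    (F P : Set C(K, ℝ)) :
    IsClosed (⋃ I ∈ {I | IsInitialSegment F I ∧ I ⊆ P}, W δ F I) ∧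
      IsClosed (⋃ J ∈ {J | IsInitialSegment F J ∧ P ⊆ J}, W δ F J) := by
  rw [iUnion_W_eq hδ F (· ⊆ P), iUnion_W_eq hδ F (P ⊆ ·)]
  exact ⟨isClosed_gapSet_vanishingSegment_subset hδ F P,
    (isClosed_gapSet δ F).inter (isClosed_subset_vanishingSegment F P)⟩

/-- **Proposition 2.1 (iii).** For every initial segment `P` of a nonempty
`δ`-`≺`-chain `F`, both `⋃_{I ⊆ P} W_I` and `⋃_{P ⊆ J} W_J` (unions over initial
segments) are compact. -/
theorem stmt3 {K : Type*} [TopologicalSpace K] [CompactSpace K] [T2Space K]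
    (δ : ℝ) (hδ : 0 < δ) (F : Set C(K, ℝ)) (hFne : F.Nonempty) (hF : IsPrecChain δ F)
    (P : Set C(K, ℝ)) (hP : IsInitialSegment F P) :
    IsCompact (⋃ I ∈ {I | IsInitialSegment F I ∧ I ⊆ P}, W δ F I) ∧
      IsCompact (⋃ J ∈ {J | IsInitialSegment F J ∧ P ⊆ J}, W δ F J) := by
  exact (stmt3_general hδ F P).imp IsClosed.isCompact IsClosed.isCompact
end

section
/- Let K be a compact Hausdorff space and M ⊆ K a closed subset such that K ∖ M = ⋃_{n=1}^∞ H_n, where each H_n is open in its closure cl(H_n) and every point of H_n has a local base of connected sets relative to cl(H_n). Then for every δ > 0 and every δ-≺-chain F ⊆ C(K), every equivalence class of the relation ∼_M on F is countable and is scattered with respect to the linear order induced by ≺ (i.e., contains no subset order-isomorphic to the rationals). -/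
open Set Topology Filter

/-- `t ∈ M` has a local base of connected sets relative to `M`: for every set `U`
open in `M` (with its subspace topology) containing `t`, there is a connected set `V`,
open in `M`, with `t ∈ V ⊆ U`. -/
def HasConnBase {K : Type*} [TopologicalSpace K] (M : Set K) (t : K) (ht : t ∈ M) : Prop :=
  ∀ U : Set ↥M, IsOpen U → (⟨t, ht⟩ : ↥M) ∈ U →
    ∃ V : Set ↥M, IsOpen V ∧ IsConnected V ∧ (⟨t, ht⟩ : ↥M) ∈ V ∧ V ⊆ U

/-- `f ∼_M g`: the supremum of `|f - g|` over `M` is `< δ`. -/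
def SimM {K : Type*} [TopologicalSpace K] (δ : ℝ) (M : Set K) (f g : C(K, ℝ)) : Prop :=
  (⨆ t : ↥M, |f ↑t - g ↑t|) < δ

/-!
Inside an equivalence class of `∼_M`, to `f ≺ g` associate the nonempty closed set `jumpSet δ f g`
of the points where `f` vanishes and `δ ≤ |g|`. Since `f` and `g` are close on `M`, this set is
covered by the `H n`, and it shrinks when the interval from `f` to `g` does. If `f ≺ h ≺ g` and `V`
is a connected set on which `g` has no zero, then `h` either vanishes identically or has no zero on
`V`, so `V` misses one of the jump sets of `(f, h)` and `(h, g)`. By compactness, if a closed set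
`Z` does not meet the jump set of an interval on `closure (H n) \ H n`, then among infinitely many
consecutive subintervals there is one whose jump set misses `Z ∩ closure (H n)`.

If the order were dense one could handle `H 0, H 1, …` in turn, either restricting to
`closure (H n) \ H n` or shrinking the interval, so that the resulting sets avoid `H n`. The
intersection of these nonempty compact sets avoids every `H n`, which is absurd. The same argument
with intervals replaced by final segments provides countable cofinal subsets, and dually countable
coinitial ones, in every suborder. Hence identifying elements with only countably many elements
between them gives countable classes; if the order were uncountable, representatives of these
classes would form a dense suborder.
-/

section Persistent

variable {X P : Type*} [TopologicalSpace X] [Preorder P] {D : P → Set X} {Z : Set X} {p q : P}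

/-- A closed set that still meets `D q` for every condition `q` stronger than `p`. These are the
states of the recursive construction in `exists_eq_empty_of_subset_iUnion`. -/
def IsPersistent (D : P → Set X) (Z : Set X) (p : P) : Prop :=
  IsClosed Z ∧ ∀ q, p ≤ q → (Z ∩ D q).Nonempty

theorem IsPersistent.of_le (hZ : IsPersistent D Z p) (hpq : p ≤ q) : IsPersistent D Z q :=
  ⟨hZ.1, fun r hqr => hZ.2 r (hpq.trans hqr)⟩

theorem isClosed_closure_sdiff_self_of_isLocallyClosed {H : Set X} (hH : IsLocallyClosed H) :
    IsClosed (closure H \ H) := by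
  simpa only [coborder, compl_compl] using hH.isOpen_coborder.isClosed_compl

theorem IsPersistent.exists_subset_disjoint (hZ : IsPersistent D Z p) {H : Set X}
    (hH : IsLocallyClosed H)
    (hstep : ∀ q, Disjoint (Z ∩ (closure H \ H)) (D q) →
      ∃ r, q ≤ r ∧ Disjoint (Z ∩ closure H) (D r)) :
    ∃ Z' q, Z' ⊆ Z ∧ p ≤ q ∧ IsPersistent D Z' q ∧ Disjoint (Z' ∩ H) (D q) := by
  by_cases h : IsPersistent D (Z ∩ (closure H \ H)) p
  · exact ⟨_, p, inter_subset_left, le_rfl, h,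
      Set.disjoint_left.2 fun _ hx _ => hx.1.2.2 hx.2⟩
  · obtain ⟨q, hpq, hq⟩ : ∃ q, p ≤ q ∧ Disjoint (Z ∩ (closure H \ H)) (D q) := by
      by_contra! hmeet
      exact h ⟨hZ.1.inter (isClosed_closure_sdiff_self_of_isLocallyClosed hH),
        fun q hpq => not_disjoint_iff_nonempty_inter.1 (hmeet q hpq)⟩
    obtain ⟨r, hqr, hr⟩ := hstep q hq
    exact ⟨Z, r, subset_rfl, hpq.trans hqr, hZ.of_le (hpq.trans hqr),
      hr.mono_left (inter_subset_inter_right _ subset_closure)⟩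

theorem exists_eq_empty_of_subset_iUnion [Nonempty P] {H : ℕ → Set X}
    (hH : ∀ n, IsLocallyClosed (H n)) (hcover : ∀ p, D p ⊆ ⋃ n, H n)
    (hlim : ∀ (Z : ℕ → Set X) (p : ℕ → P), Antitone Z → Monotone p →
      (∀ n, IsPersistent D (Z n) (p n)) → ∃ x, ∀ n, x ∈ Z n ∩ D (p n))
    (hstep : ∀ n (Z : Set X) (p : P), IsClosed Z → Disjoint (Z ∩ (closure (H n) \ H n)) (D p) →
      ∃ q, p ≤ q ∧ Disjoint (Z ∩ closure (H n)) (D q)) :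
    ∃ p, D p = ∅ := by
  by_contra! hne
  have hnext : ∀ (n : ℕ) (s : Set X × P), IsPersistent D s.1 s.2 → ∃ s' : Set X × P,
      s'.1 ⊆ s.1 ∧ s.2 ≤ s'.2 ∧ IsPersistent D s'.1 s'.2 ∧ Disjoint (s'.1 ∩ H n) (D s'.2) := by
    intro n s hs
    obtain ⟨Z, q, h⟩ := hs.exists_subset_disjoint (hH n) fun r => hstep n s.1 r hs.1
    exact ⟨(Z, q), h⟩
  choose! next hsub hle hpers hdisj using hnext
  let s : ℕ → Set X × P := Nat.rec (univ, Classical.arbitrary P) next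
  have hs : ∀ n, IsPersistent D (s n).1 (s n).2 := Nat.rec
    ⟨isClosed_univ, fun q _ => (univ_inter (D q)).symm ▸ hne q⟩ fun n => hpers n (s n)
  obtain ⟨x, hx⟩ := hlim (fun n => (s n).1) (fun n => (s n).2)
    (antitone_nat_of_succ_le fun n => hsub n (s n) (hs n))
    (monotone_nat_of_le_succ fun n => hle n (s n) (hs n)) hs
  obtain ⟨n, hn⟩ := mem_iUnion.1 (hcover _ (hx 0).2)
  exact Set.disjoint_left.1 (hdisj n (s n) (hs n)) ⟨(hx (n + 1)).1, hn⟩ (hx (n + 1)).2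

end Persistent

theorem exists_forall_nhdsWithin_frequently_mem_of_isCompact {X : Type*} [TopologicalSpace X]
    {S : Set X} (hS : IsCompact S) {ι : Type*} {l : Filter ι} [NeBot l] {x : ι → X}
    (hx : ∀ i, x i ∈ S) : ∃ y ∈ S, ∀ V ∈ 𝓝[S] y, ∃ᶠ i in l, x i ∈ V := by
  obtain ⟨y, hyS, hy⟩ := hS.exists_mapClusterPt
    (tendsto_principal.2 (Eventually.of_forall hx) : Tendsto x l (𝓟 S))
  exact ⟨y, hyS, fun V hV =>
    (hy.frequently (mem_nhdsWithin_iff_eventually.1 hV)).mono fun i hi => hi (hx i)⟩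

theorem exists_forall_lt_of_forall_not_isCofinal {I ι : Type*} [LinearOrder I] [Countable ι]
    (hI : ∀ s : Set I, s.Countable → ¬ IsCofinal s) (f : ι → I) : ∃ b, ∀ i, f i < b := by
  simpa only [forall_mem_range] using not_isCofinal_iff.1 (hI _ (countable_range f))

section TailUnion

variable {X I : Type*} [Preorder I]

/-- The union of all `A a b` with `a < b`: the analogue of `A a b` for the final segment
above `a`. -/
def tailUnion (A : I → I → Set X) (a : I) : Set X := ⋃ b ∈ Ioi a, A a b

theorem subset_tailUnion (A : I → I → Set X) {a b : I} (hab : a < b) : A a b ⊆ tailUnion A a :=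
  subset_iUnion₂ (s := fun b (_ : b ∈ Ioi a) => A a b) b hab

theorem exists_mem_of_mem_tailUnion {A : I → I → Set X} {a : I} {x : X} (hx : x ∈ tailUnion A a) :
    ∃ b, a < b ∧ x ∈ A a b := by
  simpa only [tailUnion, mem_iUnion, exists_prop, mem_Ioi] using hx

end TailUnion

section CutSystem

variable {X I : Type*} [TopologicalSpace X] [LinearOrder I]

/-- A family of closed sets `A a b` indexed by the intervals of a linear order, covered by the
sets `H n`, such that around each point of `H n`, inside `closure (H n)`, the part of `A a b` lives
on a single cut of the interval. It isolates what the proof uses of the sets `jumpSet`. -/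
structure CutSystem (H : ℕ → Set X) (A : I → I → Set X) : Prop where
  isClosed : ∀ a b, IsClosed (A a b)
  nonempty : ∀ a b, a < b → (A a b).Nonempty
  subset_iUnion : ∀ a b, a < b → A a b ⊆ ⋃ n, H n
  mono : ∀ a a' b' b, a ≤ a' → a' < b' → b' ≤ b → A a' b' ⊆ A a b
  split : ∀ n a b, ∀ t ∈ H n ∩ A a b, a < b →
    ∃ V ∈ 𝓝[closure (H n)] t, ∀ c ∈ Ioo a b, Disjoint V (A a c) ∨ Disjoint V (A c b)

namespace CutSystem

variable {H : ℕ → Set X} {A : I → I → Set X}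

theorem dual (h : CutSystem H A) :
    CutSystem H (fun a b : Iᵒᵈ => A (OrderDual.ofDual b) (OrderDual.ofDual a)) where
  isClosed _ _ := h.isClosed _ _
  nonempty _ _ hab := h.nonempty _ _ hab
  subset_iUnion _ _ hab := h.subset_iUnion _ _ hab
  mono _ _ _ _ ha hab hb := h.mono _ _ _ _ hb hab ha
  split n a b t ht hab := by
    obtain ⟨V, hV, hcut⟩ := h.split n _ _ t ht hab
    exact ⟨V, hV, fun c hc => (hcut (OrderDual.ofDual c) hc.symm).symm⟩

theorem comap {J : Type*} [LinearOrder J] (h : CutSystem H A) {φ : J → I} (hφ : StrictMono φ) :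
    CutSystem H (fun a b => A (φ a) (φ b)) where
  isClosed _ _ := h.isClosed _ _
  nonempty _ _ hab := h.nonempty _ _ (hφ hab)
  subset_iUnion _ _ hab := h.subset_iUnion _ _ (hφ hab)
  mono _ _ _ _ ha hab hb := h.mono _ _ _ _ (hφ.monotone ha) (hφ hab) (hφ.monotone hb)
  split n a b t ht hab := by
    obtain ⟨V, hV, hcut⟩ := h.split n _ _ t ht (hφ hab)
    exact ⟨V, hV, fun c hc => hcut (φ c) ⟨hφ hc.1, hφ hc.2⟩⟩

variable [CompactSpace X]

theorem exists_disjoint_of_strictMono (h : CutSystem H A) {n : ℕ} {Z : Set X} (hZ : IsClosed Z)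
    {a b : I} (hZB : Disjoint (Z ∩ (closure (H n) \ H n)) (A a b)) {c : ℕ → I}
    (hc : StrictMono c) (hcab : ∀ i, c i ∈ Icc a b) :
    ∃ i, Disjoint (Z ∩ closure (H n)) (A (c i) (c (i + 1))) := by
  by_contra! hmeet
  choose x hx using fun i => not_disjoint_iff.1 (hmeet i)
  have hlt : ∀ i, c i < c (i + 1) := fun i => hc i.lt_succ_self
  have hxS : ∀ i, x i ∈ Z ∩ closure (H n) ∩ A a b := fun i =>
    ⟨(hx i).1, h.mono _ _ _ _ (hcab i).1 (hlt i) (hcab (i + 1)).2 (hx i).2⟩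
  obtain ⟨y, ⟨hyZ, hyA⟩, hfreq⟩ := exists_forall_nhdsWithin_frequently_mem_of_isCompact
    ((hZ.inter isClosed_closure).inter (h.isClosed a b)).isCompact (l := atTop) hxS
  have hyH : y ∈ H n := by
    by_contra hyH
    exact Set.disjoint_left.1 hZB ⟨hyZ.1, hyZ.2, hyH⟩ hyA
  obtain ⟨V, hV, hcut⟩ := h.split n a b y ⟨hyH, hyA⟩
    ((hcab 0).1.trans_lt ((hlt 0).trans_le (hcab 1).2))
  replace hfreq := hfreq V (nhdsWithin_mono _ (fun _ hz => hz.1.2) hV)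
  obtain ⟨i, -, hiV⟩ := frequently_atTop.1 hfreq 0
  obtain ⟨j, hij, hjV⟩ := frequently_atTop.1 hfreq (i + 1)
  have hcij : c (i + 1) ≤ c j := hc.monotone hij
  have hcj : c j ∈ Ioo a b :=
    ⟨(hcab i).1.trans_lt ((hlt i).trans_le hcij), (hlt j).trans_le (hcab (j + 1)).2⟩
  rcases hcut (c j) hcj with hV | hV
  · exact Set.disjoint_left.1 hV hiV (h.mono _ _ _ _ (hcab i).1 (hlt i) hcij (hx i).2)
  · exact Set.disjoint_left.1 hV hjV (h.mono _ _ _ _ le_rfl (hlt j) (hcab (j + 1)).2 (hx j).2)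

theorem not_denselyOrdered [Nontrivial I] (h : CutSystem H A) (hH : ∀ n, IsLocallyClosed (H n)) :
    ¬ DenselyOrdered I := by
  intro _
  let P := {p : I × Iᵒᵈ // p.1 < OrderDual.ofDual p.2}
  let D : P → Set X := fun p => A p.1.1 (OrderDual.ofDual p.1.2)
  have hD : Antitone D := fun p q hpq => h.mono _ _ _ _ hpq.1 q.2 hpq.2
  have : Nonempty P := by
    obtain ⟨a, b, hab⟩ := exists_pair_lt I
    exact ⟨⟨(a, OrderDual.toDual b), hab⟩⟩
  obtain ⟨p, hp⟩ : ∃ p, D p = ∅ := by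
    refine exists_eq_empty_of_subset_iUnion hH (fun p => h.subset_iUnion _ _ p.2) ?_ ?_
    · intro Z p hZ hp hpers
      have hclosed : ∀ n, IsClosed (Z n ∩ D (p n)) := fun n => (hpers n).1.inter (h.isClosed _ _)
      obtain ⟨x, hx⟩ := IsCompact.nonempty_iInter_of_sequence_nonempty_isCompact_isClosed _
        (fun n => inter_subset_inter (hZ n.le_succ) (hD (hp n.le_succ)))
        (fun n => (hpers n).2 _ le_rfl) (hclosed 0).isCompact hclosed
      exact ⟨x, mem_iInter.1 hx⟩
    · rintro n Z ⟨⟨a, b⟩, hab⟩ hZ hZB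
      have : Nonempty (Ioo a (OrderDual.ofDual b)) := (nonempty_Ioo.2 hab).to_subtype
      obtain ⟨c, hc⟩ := Nat.exists_strictMono (Ioo a (OrderDual.ofDual b))
      have hcab : ∀ i, (c i : I) ∈ Icc a (OrderDual.ofDual b) := fun i =>
        Ioo_subset_Icc_self (c i).2
      obtain ⟨i, hi⟩ := h.exists_disjoint_of_strictMono hZ hZB (c := fun i => (c i : I))
        (fun i j hij => hc hij) hcab
      exact ⟨⟨(c i, OrderDual.toDual (c (i + 1) : I)), hc i.lt_succ_self⟩,
        ⟨(hcab i).1, (hcab (i + 1)).2⟩, hi⟩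
  exact (h.nonempty _ _ p.2).ne_empty hp

theorem exists_forall_mem_inter_tailUnion (h : CutSystem H A)
    (hI : ∀ s : Set I, s.Countable → ¬ IsCofinal s) {Z : ℕ → Set X} {p : ℕ → I}
    (hZ : Antitone Z) (hpers : ∀ n, IsPersistent (tailUnion A) (Z n) (p n)) :
    ∃ x, ∀ n, x ∈ Z n ∩ tailUnion A (p n) := by
  obtain ⟨a, hpa⟩ := exists_forall_lt_of_forall_not_isCofinal hI p
  have hmeet : ∀ n, ∃ b, a < b ∧ (Z n ∩ A a b).Nonempty := fun n => by
    obtain ⟨x, hxZ, hxD⟩ := (hpers n).2 a (hpa n).le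
    obtain ⟨b, hab, hxb⟩ := exists_mem_of_mem_tailUnion hxD
    exact ⟨b, hab, x, hxZ, hxb⟩
  choose b hab hne using hmeet
  obtain ⟨β, hbβ⟩ := exists_forall_lt_of_forall_not_isCofinal hI b
  have haβ : a < β := (hab 0).trans (hbβ 0)
  have hclosed : ∀ n, IsClosed (Z n ∩ A a β) := fun n => (hpers n).1.inter (h.isClosed _ _)
  obtain ⟨x, hx⟩ := IsCompact.nonempty_iInter_of_sequence_nonempty_isCompact_isClosed _
    (fun n => inter_subset_inter_left _ (hZ n.le_succ))
    (fun n => (hne n).mono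
      (inter_subset_inter_right _ (h.mono _ _ _ _ le_rfl (hab n) (hbβ n).le)))
    (hclosed 0).isCompact hclosed
  refine ⟨x, fun n => ?_⟩
  obtain ⟨hxZ, hxA⟩ := mem_iInter.1 hx n
  exact ⟨hxZ, subset_tailUnion A ((hpa n).trans haβ) (h.mono _ _ _ _ (hpa n).le haβ le_rfl hxA)⟩

theorem exists_disjoint_tailUnion (h : CutSystem H A)
    (hI : ∀ s : Set I, s.Countable → ¬ IsCofinal s) {n : ℕ} {Z : Set X} (hZ : IsClosed Z) {p : I}
    (hZB : Disjoint (Z ∩ (closure (H n) \ H n)) (tailUnion A p)) :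
    ∃ q, p ≤ q ∧ Disjoint (Z ∩ closure (H n)) (tailUnion A q) := by
  by_contra! hmeet
  have hnext : ∀ q : Ici p, ∃ r : Ici p, q < r ∧ ¬ Disjoint (Z ∩ closure (H n)) (A q r) := by
    intro q
    obtain ⟨x, hxZ, hxD⟩ := not_disjoint_iff.1 (hmeet q q.2)
    obtain ⟨b, hqb, hxb⟩ := exists_mem_of_mem_tailUnion hxD
    exact ⟨⟨b, le_trans q.2 hqb.le⟩, hqb, not_disjoint_iff.2 ⟨x, hxZ, hxb⟩⟩
  choose next hlt hnext using hnext
  let c : ℕ → Ici p := fun i => next^[i] ⟨p, le_rfl⟩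
  have hsucc : ∀ i, c (i + 1) = next (c i) := fun i => Function.iterate_succ_apply' _ _ _
  have hc : StrictMono c := strictMono_nat_of_lt_succ fun i => hsucc i ▸ hlt (c i)
  obtain ⟨b, hcb⟩ := exists_forall_lt_of_forall_not_isCofinal hI fun i => (c i : I)
  have hpb : p < b := hcb 0
  obtain ⟨i, hi⟩ := h.exists_disjoint_of_strictMono hZ (hZB.mono_right (subset_tailUnion A hpb))
    (c := fun i => (c i : I)) (fun i j hij => hc hij) (fun i => ⟨(c i).2, (hcb i).le⟩)
  exact hnext (c i) (hsucc i ▸ hi)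

theorem exists_countable_isCofinal (h : CutSystem H A) (hH : ∀ n, IsLocallyClosed (H n)) :
    ∃ s : Set I, s.Countable ∧ IsCofinal s := by
  by_contra! hI
  have : Nonempty I := not_isEmpty_iff.1 (mt isCofinal_empty_iff.2 (hI ∅ countable_empty))
  obtain ⟨a, ha⟩ := exists_eq_empty_of_subset_iUnion (D := tailUnion A) hH
    (fun a => iUnion₂_subset fun b hab => h.subset_iUnion _ _ hab)
    (fun Z p hZ _ hpers => h.exists_forall_mem_inter_tailUnion hI hZ hpers)
    (fun n Z p hZ hZB => h.exists_disjoint_tailUnion hI hZ hZB)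
  obtain ⟨b, hab⟩ := exists_forall_lt_of_forall_not_isCofinal hI fun _ : Unit => a
  exact ((h.nonempty _ _ (hab ())).mono (subset_tailUnion A (hab ()))).ne_empty ha

end CutSystem

end CutSystem

section Countable

variable {I : Type*} [LinearOrder I]

theorem countable_inter_Ici_of_isCofinal {E : Set I} {s : Set E} (hs : s.Countable)
    (hcof : IsCofinal s) {a : I} (hE : ∀ x ∈ E, (Icc a x).Countable) : (E ∩ Ici a).Countable := by
  refine (hs.biUnion fun x _ => hE x x.2).mono ?_
  rintro y ⟨hyE, hay⟩
  obtain ⟨x, hxs, hyx⟩ := hcof ⟨y, hyE⟩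
  exact mem_iUnion₂.2 ⟨x, hxs, hay, hyx⟩

theorem countable_inter_Iic_of_isCofinal_dual {E : Set I} {s : Set (↥E)ᵒᵈ} (hs : s.Countable)
    (hcof : IsCofinal s) {a : I} (hE : ∀ x ∈ E, (Icc x a).Countable) : (E ∩ Iic a).Countable :=
  countable_inter_Ici_of_isCofinal (I := Iᵒᵈ) (E := OrderDual.ofDual ⁻¹' E) (s := s)
    (a := OrderDual.toDual a) hs hcof fun x hx => by
      rw [← OrderDual.toDual_ofDual x, Icc_toDual]
      exact hE (OrderDual.ofDual x) hx

/-- The equivalence relation identifying two points with only countably many points between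
them. -/
def countableIntervalSetoid (I : Type*) [LinearOrder I] : Setoid I where
  r a b := (uIcc a b).Countable
  iseqv :=
    { refl := fun a => by simp only [uIcc_self, countable_singleton]
      symm := fun {a b} hab => by rwa [uIcc_comm]
      trans := fun hab hbc => (hab.union hbc).mono uIcc_subset_uIcc_union_uIcc }

theorem countable_setOf_countable_uIcc
    (hcof : ∀ E : Set I, ∃ s : Set E, s.Countable ∧ IsCofinal s)
    (hcoinit : ∀ E : Set I, ∃ s : Set (↥E)ᵒᵈ, s.Countable ∧ IsCofinal s) (a : I) :
    {x | (uIcc a x).Countable}.Countable := by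
  obtain ⟨s, hs, hscof⟩ := hcof {x | (uIcc a x).Countable}
  obtain ⟨t, ht, htcof⟩ := hcoinit {x | (uIcc a x).Countable}
  have hup := countable_inter_Ici_of_isCofinal hs hscof (a := a) fun x hx =>
    hx.mono Icc_subset_uIcc
  have hdown := countable_inter_Iic_of_isCofinal_dual ht htcof (a := a) fun x hx =>
    hx.mono Icc_subset_uIcc'
  refine (hup.union hdown).mono fun x hx => ?_
  exact (le_total a x).imp (fun hax => ⟨hx, hax⟩) fun hxa => ⟨hx, hxa⟩

theorem exists_mem_notMem_of_not_countable {α : Type*} {s t : Set α} (hs : ¬ s.Countable)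
    (ht : t.Countable) : ∃ x ∈ s, x ∉ t :=
  not_subset.1 fun hst => hs (ht.mono hst)

theorem nontrivial_range_out_countableIntervalSetoid [Uncountable I]
    (hclass : ∀ a : I, {x | (uIcc a x).Countable}.Countable) :
    (range (Quotient.out : Quotient (countableIntervalSetoid I) → I)).Nontrivial := by
  obtain ⟨x⟩ := (inferInstance : Nonempty I)
  obtain ⟨y, -, hy⟩ := exists_mem_notMem_of_not_countable not_countable_univ (hclass x)
  refine ⟨_, mem_range_self ⟦x⟧, _, mem_range_self ⟦y⟧, fun hxy => hy ?_⟩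
  exact Quotient.exact (Quotient.out_injective hxy)

theorem denselyOrdered_range_out_countableIntervalSetoid
    (hclass : ∀ a : I, {x | (uIcc a x).Countable}.Countable) :
    DenselyOrdered (range (Quotient.out : Quotient (countableIntervalSetoid I) → I)) := by
  refine ⟨?_⟩
  rintro ⟨_, p, rfl⟩ ⟨_, q, rfl⟩ (hpq : p.out < q.out)
  have hunc : ¬ (Icc p.out q.out).Countable := fun hcount => by
    rw [← uIcc_of_le hpq.le] at hcount
    exact hpq.ne (congrArg Quotient.out (Quotient.out_equiv_out.1 hcount))
  obtain ⟨z, hz, hz'⟩ :=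
    exists_mem_notMem_of_not_countable hunc ((hclass p.out).union (hclass q.out))
  let r : Quotient (countableIntervalSetoid I) := ⟦z⟧
  have hr : (uIcc r.out z).Countable := Quotient.mk_out (s := countableIntervalSetoid I) z
  have hpr : p.out < r.out := lt_of_not_ge fun hrp => hz' <| Or.inl <|
    hr.mono (uIcc_subset_uIcc_right (mem_uIcc_of_le hrp hz.1))
  have hrq : r.out < q.out := lt_of_not_ge fun hqr => hz' <| Or.inr <|
    hr.mono (uIcc_subset_uIcc_right (mem_uIcc_of_ge hz.2 hqr))
  exact ⟨⟨r.out, mem_range_self r⟩, hpr, hrq⟩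

theorem countable_of_forall_not_denselyOrdered_of_isCofinal
    (hdense : ∀ R : Set I, R.Nontrivial → ¬ DenselyOrdered R)
    (hcof : ∀ E : Set I, ∃ s : Set E, s.Countable ∧ IsCofinal s)
    (hcoinit : ∀ E : Set I, ∃ s : Set (↥E)ᵒᵈ, s.Countable ∧ IsCofinal s) :
    Countable I := by
  by_contra hI
  have := not_countable_iff.1 hI
  have hclass := countable_setOf_countable_uIcc hcof hcoinit
  exact hdense _ (nontrivial_range_out_countableIntervalSetoid hclass)
    (denselyOrdered_range_out_countableIntervalSetoid hclass)

theorem CutSystem.countable {X : Type*} [TopologicalSpace X] [CompactSpace X] {H : ℕ → Set X}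
    {A : I → I → Set X} (h : CutSystem H A) (hH : ∀ n, IsLocallyClosed (H n)) : Countable I := by
  have hsub (E : Set I) := h.comap (Subtype.strictMono_coe (· ∈ E))
  refine countable_of_forall_not_denselyOrdered_of_isCofinal (fun R hR => ?_)
    (fun E => (hsub E).exists_countable_isCofinal hH)
    (fun E => (hsub E).dual.exists_countable_isCofinal hH)
  have := hR.coe_sort
  exact (hsub R).not_denselyOrdered hH

end Countable

section Prec

variable {K : Type*} [TopologicalSpace K] {f g h : C(K, ℝ)} {δ : ℝ}

theorem Prec.eq_of_ne_zero (hfg : Prec f g) {t : K} (ht : f t ≠ 0) : f t = g t :=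
  hfg.2 t (subset_closure ht)

theorem Prec.eq_zero_of_eq_zero (hfg : Prec f g) {t : K} (ht : g t = 0) : f t = 0 :=
  by_contra fun hft => hft ((hfg.eq_of_ne_zero hft).trans ht)

theorem Prec.asymm (hfg : Prec f g) : ¬ Prec g f := by
  refine fun hgf => hfg.1 (ContinuousMap.ext fun t => ?_)
  by_cases hft : f t = 0
  · rw [hft, hgf.eq_zero_of_eq_zero hft]
  · exact hfg.eq_of_ne_zero hft

theorem Prec.trans (hfg : Prec f g) (hgh : Prec g h) : Prec f h := by
  have hsub : {t | f t ≠ 0} ⊆ {t | g t ≠ 0} := fun t => mt hfg.eq_zero_of_eq_zero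
  refine ⟨?_, fun t ht => (hfg.2 t ht).trans (hgh.2 t (closure_mono hsub ht))⟩
  rintro rfl
  exact hfg.asymm hgh

/-- A chain, linearly ordered by `≺`. -/
noncomputable abbrev IsPrecChain.linearOrder [CompactSpace K] {F : Set C(K, ℝ)}
    (hF : IsPrecChain δ F) : LinearOrder F :=
  have : IsStrictTotalOrder F (fun f g => Prec f.1 g.1) :=
    { irrefl := fun _ hff => hff.1 rfl
      trans := fun _ _ _ => Prec.trans
      trichotomous := fun f g hfg hgf => by
        by_contra hne
        rcases hF f f.2 g g.2 (Subtype.coe_ne_coe.2 hne) with hlt | hlt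
        exacts [hfg hlt.1, hgf hlt.1] }
  have := Classical.decRel fun f g : F => Prec f.1 g.1
  linearOrderOfSTO fun f g => Prec f.1 g.1

theorem IsPrecChain.mono [CompactSpace K] {F G : Set C(K, ℝ)} (hF : IsPrecChain δ F)
    (hGF : G ⊆ F) : IsPrecChain δ G :=
  fun f hf g hg => hF f (hGF hf) g (hGF hg)

theorem IsPrecChain.le_norm_sub [CompactSpace K] {F : Set C(K, ℝ)} (hF : IsPrecChain δ F)
    (hf : f ∈ F) (hg : g ∈ F) (hfg : f ≠ g) : δ ≤ ‖f - g‖ := by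
  rcases hF f hf g hg hfg with hlt | hlt
  · exact hlt.2
  · exact norm_sub_rev g f ▸ hlt.2

theorem IsPrecChain.eq_zero_or_eq [CompactSpace K] {F : Set C(K, ℝ)} (hF : IsPrecChain δ F)
    (hf : f ∈ F) (hg : g ∈ F) {t : K} (hgt : g t ≠ 0) : f t = 0 ∨ f t = g t := by
  by_cases hfg : f = g
  · exact Or.inr (by rw [hfg])
  rcases hF f hf g hg hfg with hlt | hlt
  · exact or_iff_not_imp_left.2 hlt.1.eq_of_ne_zero
  · exact Or.inr (hlt.1.eq_of_ne_zero hgt).symm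

theorem SimM.abs_sub_lt [CompactSpace K] {M : Set K} (hfg : SimM δ M f g) {t : K} (ht : t ∈ M) :
    |f t - g t| < δ := by
  have hbdd : BddAbove (range fun t : M => |f t - g t|) :=
    ⟨‖f - g‖, forall_mem_range.2 fun t => (f - g).norm_coe_le_norm t⟩
  exact (le_ciSup hbdd ⟨t, ht⟩).trans_lt hfg

theorem Prec.forall_eq_zero_or_forall_ne_zero (hfg : Prec f g) {V : Set K} (hV : IsPreconnected V)
    (hgV : ∀ t ∈ V, g t ≠ 0) : (∀ t ∈ V, f t = 0) ∨ ∀ t ∈ V, f t ≠ 0 := by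
  have hne : ∀ t ∈ V, t ∈ closure {t | f t ≠ 0} → f t ≠ 0 := fun t htV ht => by
    rw [hfg.2 t ht]
    exact hgV t htV
  rcases hV.subset_or_subset (isOpen_ne_fun f.continuous continuous_const)
    isClosed_closure.isOpen_compl (disjoint_compl_right_iff_subset.2 subset_closure)
    (fun t htV => or_iff_not_imp_right.2 fun ht => hne t htV (not_not.1 ht)) with hsub | hsub
  · exact Or.inr hsub
  · exact Or.inl fun t htV => not_not.1 fun hft => hsub htV (subset_closure hft)

theorem HasConnBase.exists_isPreconnected_subset {M U : Set K} {t : K} {ht : t ∈ M}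
    (hM : HasConnBase M t ht) (hU : IsOpen U) (htU : t ∈ U) :
    ∃ V ∈ 𝓝[M] t, IsPreconnected V ∧ V ⊆ U := by
  obtain ⟨V, hVo, hVc, htV, hVU⟩ := hM (Subtype.val ⁻¹' U) (hU.preimage continuous_subtype_val) htU
  refine ⟨Subtype.val '' V, ?_,
    hVc.isPreconnected.image _ continuous_subtype_val.continuousOn, image_subset_iff.2 hVU⟩
  rw [nhdsWithin_eq_map_subtype_coe ht]
  exact image_mem_map (hVo.mem_nhds htV)

end Prec

section JumpSet

variable {K : Type*} [TopologicalSpace K] {f g h : C(K, ℝ)} {δ : ℝ}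

/-- The points where passing from `f` to `g` is a jump from `0` to a value of modulus at least `δ`;
for `f ≺ g` these are the points witnessing `δ ≤ ‖f - g‖`. -/
def jumpSet (δ : ℝ) (f g : C(K, ℝ)) : Set K := {t | δ ≤ |g t| ∧ f t = 0}

theorem isClosed_jumpSet : IsClosed (jumpSet δ f g) :=
  (isClosed_le continuous_const g.continuous.abs).inter (isClosed_eq f.continuous continuous_const)

theorem ne_zero_of_mem_jumpSet (hδ : 0 < δ) {t : K} (ht : t ∈ jumpSet δ f g) : g t ≠ 0 :=
  abs_pos.1 (hδ.trans_le ht.1)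

theorem Prec.jumpSet_subset_jumpSet_left (hfg : Prec f g) : jumpSet δ g h ⊆ jumpSet δ f h :=
  fun _ ht => ⟨ht.1, hfg.eq_zero_of_eq_zero ht.2⟩

theorem Prec.jumpSet_subset_jumpSet_right (hgh : Prec g h) (hδ : 0 < δ) :
    jumpSet δ f g ⊆ jumpSet δ f h :=
  fun _ ht => ⟨hgh.eq_of_ne_zero (ne_zero_of_mem_jumpSet hδ ht) ▸ ht.1, ht.2⟩

theorem Prec.nonempty_jumpSet [CompactSpace K] (hfg : Prec f g) (hδ : 0 < δ)
    (hnorm : δ ≤ ‖f - g‖) : (jumpSet δ f g).Nonempty := by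
  obtain ⟨t, ht⟩ : ∃ t, δ ≤ ‖(f - g) t‖ := by
    by_contra! hlt
    exact hnorm.not_gt ((ContinuousMap.norm_lt_iff _ hδ).2 hlt)
  rw [ContinuousMap.sub_apply, Real.norm_eq_abs] at ht
  have hft : f t = 0 := by_contra fun hft =>
    sub_ne_zero.1 (abs_pos.1 (hδ.trans_le ht)) (hfg.eq_of_ne_zero hft)
  refine ⟨t, ?_, hft⟩
  rwa [hft, zero_sub, abs_neg] at ht

theorem IsPrecChain.jumpSet_subset_compl [CompactSpace K] {M : Set K} {F : Set C(K, ℝ)}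
    (hF : IsPrecChain δ F) (hδ : 0 < δ) {f₀ : C(K, ℝ)} (hf₀ : f₀ ∈ F) (hg : g ∈ F)
    (hf₀f : SimM δ M f₀ f) (hf₀g : SimM δ M f₀ g) : jumpSet δ f g ⊆ Mᶜ := by
  intro t ht htM
  have hf := hf₀f.abs_sub_lt htM
  have hg' := hf₀g.abs_sub_lt htM
  rcases hF.eq_zero_or_eq hf₀ hg (ne_zero_of_mem_jumpSet hδ ht) with hf₀t | hf₀t
  · rw [hf₀t, zero_sub, abs_neg] at hg'
    exact hg'.not_ge ht.1
  · rw [hf₀t, ht.2, sub_zero] at hf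
    exact hf.not_ge ht.1

theorem Prec.disjoint_jumpSet_or_disjoint_jumpSet (hgh : Prec g h) (hδ : 0 < δ) {V : Set K}
    (hV : IsPreconnected V) (hhV : ∀ t ∈ V, h t ≠ 0) :
    Disjoint V (jumpSet δ f g) ∨ Disjoint V (jumpSet δ g h) :=
  (hgh.forall_eq_zero_or_forall_ne_zero hV hhV).imp
    (fun hg => Set.disjoint_left.2 fun t htV ht => ne_zero_of_mem_jumpSet hδ ht (hg t htV))
    (fun hg => Set.disjoint_left.2 fun t htV ht => hg t htV ht.2)

theorem IsPrecChain.cutSystem_jumpSet [CompactSpace K] {I : Type*} [LinearOrder I]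
    {H : ℕ → Set K} {C : Set C(K, ℝ)} (hC : IsPrecChain δ C) (hδ : 0 < δ)
    (hcover : ∀ f ∈ C, ∀ g ∈ C, jumpSet δ f g ⊆ ⋃ n, H n)
    (hconn : ∀ n, ∀ t, ∀ ht : t ∈ H n, HasConnBase (closure (H n)) t (subset_closure ht))
    {e : I → C(K, ℝ)} (heC : ∀ i, e i ∈ C) (he : ∀ i j, i < j → Prec (e i) (e j)) :
    CutSystem H (fun i j => jumpSet δ (e i) (e j)) where
  isClosed _ _ := isClosed_jumpSet
  nonempty a b hab :=
    (he a b hab).nonempty_jumpSet hδ (hC.le_norm_sub (heC a) (heC b) (he a b hab).1)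
  subset_iUnion a b _ := hcover _ (heC a) _ (heC b)
  mono a a' b' b ha _ hb := by
    have hleft : jumpSet δ (e a') (e b') ⊆ jumpSet δ (e a) (e b') := by
      rcases ha.eq_or_lt with rfl | ha
      exacts [subset_rfl, (he a a' ha).jumpSet_subset_jumpSet_left]
    have hright : jumpSet δ (e a) (e b') ⊆ jumpSet δ (e a) (e b) := by
      rcases hb.eq_or_lt with rfl | hb
      exacts [subset_rfl, (he b' b hb).jumpSet_subset_jumpSet_right hδ]
    exact hleft.trans hright
  split n a b t ht _ := by
    obtain ⟨V, hVt, hV, hbV⟩ := (hconn n t ht.1).exists_isPreconnected_subset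
      (isOpen_ne_fun (e b).continuous continuous_const) (ne_zero_of_mem_jumpSet hδ ht.2)
    exact ⟨V, hVt, fun c hc => (he c b hc.2).disjoint_jumpSet_or_disjoint_jumpSet hδ hV hbV⟩

end JumpSet

theorem stmt7_general {K : Type*} [TopologicalSpace K] [CompactSpace K]
    (M : Set K) (H : ℕ → Set K) (hcover : Mᶜ = ⋃ n, H n)
    (hopen : ∀ n, ∃ U : Set K, IsOpen U ∧ H n = U ∩ closure (H n))
    (hconn : ∀ n, ∀ t, ∀ ht : t ∈ H n, HasConnBase (closure (H n)) t (subset_closure ht))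
    (δ : ℝ) (hδ : 0 < δ) (F : Set C(K, ℝ)) (hF : IsPrecChain δ F)
    (f₀ : C(K, ℝ)) (hf₀ : f₀ ∈ F) :
    ({g ∈ F | SimM δ M f₀ g}).Countable ∧
      ¬ ∃ e : ℚ → C(K, ℝ), (∀ q, e q ∈ {g ∈ F | SimM δ M f₀ g}) ∧
        ∀ q r : ℚ, q < r → Prec (e q) (e r) := by
  have hH : ∀ n, IsLocallyClosed (H n) := fun n => by
    obtain ⟨U, hU, hHU⟩ := hopen n
    exact ⟨U, closure (H n), hU, isClosed_closure, hHU⟩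
  have hC : IsPrecChain δ {g ∈ F | SimM δ M f₀ g} := hF.mono (sep_subset _ _)
  have hjump : ∀ f ∈ {g ∈ F | SimM δ M f₀ g}, ∀ g ∈ {g ∈ F | SimM δ M f₀ g},
      jumpSet δ f g ⊆ ⋃ n, H n := fun f hf g hg =>
    hcover ▸ hF.jumpSet_subset_compl hδ hf₀ hg.1 hf.2 hg.2
  constructor
  · let _ := hC.linearOrder
    exact (hC.cutSystem_jumpSet hδ hjump hconn (e := Subtype.val) Subtype.property
      fun _ _ hfg => hfg).countable hH
  · rintro ⟨e, heC, he⟩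
    exact (hC.cutSystem_jumpSet hδ hjump hconn heC he).not_denselyOrdered hH inferInstance

/-- **Theorem 3.6 (1).** Let `M ⊆ K` be closed with `K ∖ M = ⋃ₙ Hₙ`, each `Hₙ` open in
its closure and each point of `Hₙ` having a local base of connected sets relative to
`cl(Hₙ)`. Then for every `δ > 0` and every `δ`-`≺`-chain `F ⊆ C(K)`, every equivalence
class of `∼_M` on `F` is countable and scattered in the order induced by `≺`
(contains no copy of `ℚ`). -/
theorem stmt7 {K : Type*} [TopologicalSpace K] [CompactSpace K] [T2Space K]
    (M : Set K) (hM : IsClosed M) (H : ℕ → Set K) (hcover : Mᶜ = ⋃ n, H n)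
    (hopen : ∀ n, ∃ U : Set K, IsOpen U ∧ H n = U ∩ closure (H n))
    (hconn : ∀ n, ∀ t, ∀ ht : t ∈ H n, HasConnBase (closure (H n)) t (subset_closure ht))
    (δ : ℝ) (hδ : 0 < δ) (F : Set C(K, ℝ)) (hF : IsPrecChain δ F)
    (f₀ : C(K, ℝ)) (hf₀ : f₀ ∈ F) :
    ({g ∈ F | SimM δ M f₀ g}).Countable ∧
      ¬ ∃ e : ℚ → C(K, ℝ), (∀ q, e q ∈ {g ∈ F | SimM δ M f₀ g}) ∧
        ∀ q r : ℚ, q < r → Prec (e q) (e r) :=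
  stmt7_general M H hcover hopen hconn δ hδ F hF f₀ hf₀
end

section
/- Every compact Hausdorff locally connected space has the Bishop property (B). -/
open Set Topology Filter

/-! For `f` in `C(K)` consider the connected components of `{f ≠ 0}` on which `|f|` reaches `δ`. By
local connectedness they are open, and they cover the compact set `{δ ≤ |f|}`, so there are only
finitely many. If `f ≺ g`, then `{f ≠ 0}` is relatively clopen in `{g ≠ 0}`, so that every component
of `{f ≠ 0}` is also a component of `{g ≠ 0}`; if moreover `δ ≤ ‖f - g‖`, then `|g|` reaches `δ` at
a zero of `f`, which gives a new component. Hence the number of these components is a strictly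
increasing, and so injective, function from a `δ`-`≺`-chain to `ℕ`. -/

section ConnectedComponentIn

variable {X : Type*} [TopologicalSpace X]

theorem connectedComponentIn_eq_of_closure_inter_subset {U V : Set X} (hU : IsOpen U)
    (hUV : U ⊆ V) (hcl : closure U ∩ V ⊆ U) {x : X} (hx : x ∈ U) :
    connectedComponentIn U x = connectedComponentIn V x := by
  have hxV : x ∈ connectedComponentIn V x := mem_connectedComponentIn (hUV hx)
  have hVU : connectedComponentIn V x ⊆ U :=
    isPreconnected_connectedComponentIn.subset_of_closure_inter_subset hU ⟨x, hxV, hx⟩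
      ((inter_subset_inter_right _ (connectedComponentIn_subset V x)).trans hcl)
  exact (connectedComponentIn_mono x hUV).antisymm
    (isPreconnected_connectedComponentIn.subset_connectedComponentIn hxV hVU)

theorem finite_image_connectedComponentIn_of_isCompact [LocallyConnectedSpace X] {A U : Set X}
    (hA : IsCompact A) (hU : IsOpen U) (hAU : A ⊆ U) : (connectedComponentIn U '' A).Finite := by
  obtain ⟨s, -, hs⟩ := hA.elim_nhds_subcover (connectedComponentIn U) fun x hx =>
    hU.connectedComponentIn.mem_nhds (mem_connectedComponentIn (hAU hx))
  refine (s.finite_toSet.image (connectedComponentIn U)).subset ?_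
  rintro _ ⟨y, hy, rfl⟩
  obtain ⟨x, hx, hyx⟩ := mem_iUnion₂.mp (hs hy)
  exact ⟨x, hx, connectedComponentIn_eq hyx⟩

end ConnectedComponentIn

theorem mem_support_of_le_abs {α : Type*} {f : α → ℝ} {δ : ℝ} (hδ : 0 < δ) {t : α}
    (ht : δ ≤ |f t|) : t ∈ Function.support f :=
  abs_pos.mp (hδ.trans_le ht)

section PeakComponents

variable {K : Type*} [TopologicalSpace K] {f g : C(K, ℝ)} {δ : ℝ}

/-- The connected components of `{f ≠ 0}` on which `|f|` attains a value of at least `δ`. Counting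
them ranks the members of a `δ`-`≺`-chain. This reading requires `0 < δ`, since
`connectedComponentIn` is empty at the zeros of `f`. -/
def peakComponents (δ : ℝ) (f : C(K, ℝ)) : Set (Set K) :=
  connectedComponentIn (Function.support f) '' {t | δ ≤ |f t|}

theorem peakComponents_finite [CompactSpace K] [LocallyConnectedSpace K] (hδ : 0 < δ)
    (f : C(K, ℝ)) : (peakComponents δ f).Finite :=
  finite_image_connectedComponentIn_of_isCompact
    (isClosed_le continuous_const f.continuous.abs).isCompact
    f.continuous.isOpen_support fun _ => mem_support_of_le_abs hδ

theorem subset_support_of_mem_peakComponents {C : Set K} (hC : C ∈ peakComponents δ f) :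
    C ⊆ Function.support f := by
  obtain ⟨t, -, rfl⟩ := hC
  exact connectedComponentIn_subset _ _

theorem exists_mem_peakComponents (hδ : 0 < δ) {t : K} (ht : δ ≤ |f t|) :
    ∃ C ∈ peakComponents δ f, t ∈ C :=
  ⟨_, mem_image_of_mem _ ht, mem_connectedComponentIn (mem_support_of_le_abs hδ ht)⟩

namespace Prec

theorem eq_of_mem_support (h : Prec f g) {t : K} (ht : t ∈ Function.support f) : f t = g t :=
  h.2 t (subset_closure ht)

theorem support_subset (h : Prec f g) : Function.support f ⊆ Function.support g := fun t ht => by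
  rwa [Function.mem_support, ← h.eq_of_mem_support ht]

theorem closure_support_inter_support_subset (h : Prec f g) :
    closure (Function.support f) ∩ Function.support g ⊆ Function.support f := fun t ht => by
  rw [Function.mem_support, h.2 t ht.1]
  exact ht.2

theorem connectedComponentIn_support_eq (h : Prec f g) {t : K} (ht : t ∈ Function.support f) :
    connectedComponentIn (Function.support f) t = connectedComponentIn (Function.support g) t :=
  connectedComponentIn_eq_of_closure_inter_subset f.continuous.isOpen_support h.support_subset
    h.closure_support_inter_support_subset ht

theorem peakComponents_subset (h : Prec f g) (hδ : 0 < δ) :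
    peakComponents δ f ⊆ peakComponents δ g := by
  rintro _ ⟨t, ht, rfl⟩
  have htf : t ∈ Function.support f := mem_support_of_le_abs hδ ht
  have htg : δ ≤ |g t| := h.eq_of_mem_support htf ▸ ht
  exact ⟨t, htg, (h.connectedComponentIn_support_eq htf).symm⟩

end Prec

namespace PrecDelta

variable [CompactSpace K]

theorem exists_eq_zero_and_le_abs (h : PrecDelta δ f g) (hδ : 0 < δ) :
    ∃ t, f t = 0 ∧ δ ≤ |g t| := by
  obtain ⟨t, ht⟩ : ∃ t, δ ≤ |f t - g t| := by
    by_contra! hlt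
    exact h.2.not_gt ((ContinuousMap.norm_lt_iff _ hδ).mpr hlt)
  have hft : f t = 0 := by
    by_contra hne
    rw [h.1.eq_of_mem_support hne, sub_self, abs_zero] at ht
    exact ht.not_gt hδ
  rw [hft, zero_sub, abs_neg] at ht
  exact ⟨t, hft, ht⟩

theorem peakComponents_ssubset (h : PrecDelta δ f g) (hδ : 0 < δ) :
    peakComponents δ f ⊂ peakComponents δ g := by
  obtain ⟨t, hft, hgt⟩ := h.exists_eq_zero_and_le_abs hδ
  obtain ⟨C, hCg, htC⟩ := exists_mem_peakComponents hδ hgt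
  exact (ssubset_iff_of_subset (h.1.peakComponents_subset hδ)).mpr
    ⟨C, hCg, fun hCf => subset_support_of_mem_peakComponents hCf htC hft⟩

theorem ncard_peakComponents_lt [LocallyConnectedSpace K] (h : PrecDelta δ f g) (hδ : 0 < δ) :
    (peakComponents δ f).ncard < (peakComponents δ g).ncard :=
  ncard_lt_ncard (h.peakComponents_ssubset hδ) (peakComponents_finite hδ g)

end PrecDelta

end PeakComponents

theorem stmt11_general {K : Type*} [TopologicalSpace K] [CompactSpace K] [LocallyConnectedSpace K]
    {δ : ℝ} (hδ : 0 < δ) {F : Set C(K, ℝ)} (hF : IsPrecChain δ F) : F.Countable := by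
  have hinj : InjOn (fun f => (peakComponents δ f).ncard) F := by
    intro f hf g hg hfg
    by_contra hne
    rcases hF f hf g hg hne with h | h
    · exact (h.ncard_peakComponents_lt hδ).ne hfg
    · exact (h.ncard_peakComponents_lt hδ).ne' hfg
  exact (mapsTo_univ _ F).countable_of_injOn hinj countable_univ

/-- Every compact Hausdorff locally connected space has the Bishop property (B). -/
theorem stmt11 (K : Type*) [TopologicalSpace K] [CompactSpace K] [T2Space K]
    [LocallyConnectedSpace K] : HasBishop K :=
  fun _ hδ _ hF => stmt11_general hδ hF
end
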